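/- arXiv:2211.10313 — 2 statements merged into one kernel-verified Lean document; each statement's English description precedes it below -/
import Mathlib

section
/- Let p be a prime, let q1 and q2 be powers of p, let n ≥ 3, let a be the smallest prime divisor of n, and let q = q1 ⊗ q2 = q1^d. If d < n − (n/a), then σ(A(n,q1,q2)) ≤ σ(M_n(q1)), with equality only when n = 3 and q1 = 2. Consequently, if in addition (n,q1) ≠ (3,2), then A(n,q1,q2) is σ-elementary. -/
/-!
Write `A` for `AGL n F1 F2`, `q` for the order of `F1`, `Q = q ^ d` for the order of `F`, and `a`
for the smallest prime divisor of `n`. The kernel of the projection `aglProj` of `A` onto the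
semisimple ring `M_n(F1) × F2` is the last column, and by `aglProj_ker_le` every nonzero ideal of
`A` contains it. Covers pull back along surjections, so each `A / I` with `I ≠ 0`, and likewise
`M_n(F1)`, has covering number at least that of `M_n(F1) × F2`, and everything reduces to the
strict inequality between the covering numbers of `A` and `M_n(F1) × F2` (`coveringNumber_agl_lt`).
The weak inequality with `M_n(F1)`, needed also for `(n, q) = (3, 2)`, holds because `M_n(F1)` is a
quotient of `A`.

*Upper bound for `A`* (`coveringNumber_agl_le`). Let `x` have block `M`, column `v` and corner `b`.
If `b` is not an eigenvalue of `M`, then `x` lies in one of the `Q ^ n` complements of the last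
column; otherwise `M` has a left eigenvector over `F` with eigenvalue `b`, and the elements with a
given such eigenvector form a proper subring, which depends only on a point of the projective space
of dimension `n - 1` over `F`.

*Lower bound for `M_n(F1) × F2`* (`card_units_le_of_cover`). Let `K` be the extension of `F1` of
degree `n`, identify `M_n(F1)` with `End_{F1}(K)`, and let `ζ` and `β` generate the unit groups
of `K` and `F2`. Consider the pairs `(h ζ h⁻¹, β)` with `h` invertible. A proper subring containing
one of them has, after conjugation, a proper first projection containing `K`, and by the density
theorem this projection centralizes some `δ ∈ K` outside `F1` (`exists_centralizing`). An `h` for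
which `h ζ h⁻¹` centralizes `δ` intertwines multiplication by a Galois conjugate of `δ` with
multiplication by `δ`, which leaves at most `a * q ^ (n * (n / a))` possibilities
(`card_units_commute_le`). So a cover has at least `|GL_n(q)| / (a * q ^ (n * (n / a)))` members.

When `d < n - n / a` and `(n, q) ≠ (3, 2)` the lower bound exceeds the upper one
(`numeric_comparison`), because `|GL_n(q)| > q ^ (n * n) / 4`.
-/

open scoped Classical

noncomputable section

/-- A (finite) cover of a not-necessarily-unital ring: a finite collection of proper
subrings whose set-theoretic union is all of `R`. -/
def IsRingCover (R : Type*) [NonUnitalRing R] (C : Finset (NonUnitalSubring R)) : Prop :=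
  (∀ S ∈ C, S ≠ (⊤ : NonUnitalSubring R)) ∧ ∀ r : R, ∃ S ∈ C, r ∈ S

/-- The covering number `σ(R)`: the least cardinality of a cover of `R`,
or `⊤` if no cover exists. -/
noncomputable def coveringNumber (R : Type*) [NonUnitalRing R] : ℕ∞ :=
  sInf {c : ℕ∞ | ∃ C : Finset (NonUnitalSubring R), IsRingCover R C ∧ (C.card : ℕ∞) = c}

/-- `R` is σ-elementary if `σ(R) < σ(R/I)` for every nonzero two-sided ideal `I`. -/
def IsSigmaElementary (R : Type*) [NonUnitalRing R] : Prop :=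
  ∀ I : TwoSidedIdeal R, I ≠ ⊥ → coveringNumber R < coveringNumber I.ringCon.Quotient

/-- The AGL-type ring `A(n, F1, F2)` as a subring of `(n+1) × (n+1)` matrices over `F`:
top-left `n × n` block with entries in `F1`, arbitrary top-right column, zero bottom-left
row, bottom-right entry in `F2`. -/
def AGL (n : ℕ) {F : Type*} [Field F] (F1 F2 : Subfield F) :
    Subring (Matrix (Fin (n + 1)) (Fin (n + 1)) F) where
  carrier := {M | (∀ i j : Fin n, M i.castSucc j.castSucc ∈ F1) ∧
      (∀ j : Fin n, M (Fin.last n) j.castSucc = 0) ∧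
      M (Fin.last n) (Fin.last n) ∈ F2}
  zero_mem' := by
    refine ⟨fun i j => ?_, fun j => rfl, ?_⟩
    · exact zero_mem F1
    · exact zero_mem F2
  one_mem' := by
    refine ⟨fun i j => ?_, fun j => ?_, ?_⟩
    · rw [Matrix.one_apply]
      split
      · exact one_mem F1
      · exact zero_mem F1
    · exact Matrix.one_apply_ne (Fin.castSucc_lt_last j).ne'
    · rw [Matrix.one_apply_eq]; exact one_mem F2
  add_mem' := by
    rintro a b ⟨ha1, ha2, ha3⟩ ⟨hb1, hb2, hb3⟩
    refine ⟨fun i j => add_mem (ha1 i j) (hb1 i j), fun j => ?_, add_mem ha3 hb3⟩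
    rw [Matrix.add_apply, ha2 j, hb2 j, add_zero]
  neg_mem' := by
    rintro a ⟨ha1, ha2, ha3⟩
    refine ⟨fun i j => neg_mem (ha1 i j), fun j => ?_, neg_mem ha3⟩
    rw [Matrix.neg_apply, ha2 j, neg_zero]
  mul_mem' := by
    rintro a b ⟨ha1, ha2, ha3⟩ ⟨hb1, hb2, hb3⟩
    refine ⟨fun i j => ?_, fun j => ?_, ?_⟩
    · rw [Matrix.mul_apply, Fin.sum_univ_castSucc, hb2 j, mul_zero, add_zero]
      exact sum_mem fun k _ => mul_mem (ha1 i k) (hb1 k j)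
    · rw [Matrix.mul_apply, Fin.sum_univ_castSucc, hb2 j, mul_zero, add_zero]
      exact Finset.sum_eq_zero fun k _ => by rw [ha2 k, zero_mul]
    · rw [Matrix.mul_apply, Fin.sum_univ_castSucc]
      have h0 : ∑ k : Fin n, a (Fin.last n) k.castSucc * b k.castSucc (Fin.last n) = 0 :=
        Finset.sum_eq_zero fun k _ => by rw [ha2 k, zero_mul]
      rw [h0, zero_add]
      exact mul_mem ha3 hb3

/-- The Gaussian (q-)binomial coefficient, via the Pascal-type recurrence. -/
def gaussBinom (q : ℕ) : ℕ → ℕ → ℕ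
  | _, 0 => 1
  | 0, _ + 1 => 0
  | n + 1, k + 1 => gaussBinom q n k + q ^ (k + 1) * gaussBinom q n (k + 1)

/-- The order of `GL(N, Q)` for a prime power `Q`. -/
def GLcard (N Q : ℕ) : ℕ := ∏ k ∈ Finset.range N, (Q ^ N - Q ^ k)

/-! ### Covering numbers and surjections -/

/-- Covers pull back along surjections. -/
lemma coveringNumber_le_of_surjective {B' B : Type*} [NonUnitalRing B'] [NonUnitalRing B]
    (h : B' →ₙ+* B) (hs : Function.Surjective h) : coveringNumber B' ≤ coveringNumber B := by
  refine le_sInf ?_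
  rintro c ⟨C, ⟨hC1, hC2⟩, rfl⟩
  have hcard : ((C.image (fun S => S.comap h)).card : ℕ∞) ≤ C.card :=
    Nat.cast_le.2 Finset.card_image_le
  refine le_trans (sInf_le ?_) hcard
  refine ⟨C.image (fun S => S.comap h), ⟨?_, ?_⟩, rfl⟩
  · intro S hS
    obtain ⟨T, hT, rfl⟩ := Finset.mem_image.1 hS
    intro htop
    apply hC1 T hT
    refine eq_top_iff.2 fun x _ => ?_
    obtain ⟨y, rfl⟩ := hs x
    have : y ∈ T.comap h := htop ▸ trivial
    exact this
  · intro r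
    obtain ⟨S, hS, hr⟩ := hC2 (h r)
    exact ⟨_, Finset.mem_image_of_mem _ hS, hr⟩

/-! ### Lower bound: covers of `End k K × E`

Here `k ⊆ K` are finite fields, and `K` acts on itself by multiplication, so that `Module.End k K`
is a matrix algebra over `k` containing `K` as a maximal subfield. -/

section Lower

variable {k K : Type*} [Field k] [Field K] [Finite K] [Algebra k K]

/-- A proper subring `P` of `Module.End k K` containing the multiplications by elements of `K`
commutes with one such multiplication that is not a scalar from `k`. Indeed `K` is a simple
`P`-module whose commutant lies in `K`; if the commutant were only `k`, the density theorem would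
give `P = Module.End k K`. -/
lemma exists_centralizing (P : NonUnitalSubring (Module.End k K)) (hP : P ≠ ⊤)
    (hK : ∀ c : K, LinearMap.mulLeft k c ∈ P) :
    ∃ δ : K, δ ∉ (algebraMap k K).range ∧ ∀ r ∈ P, ∀ y, r (δ * y) = δ * r y := by
  have hone : (1 : Module.End k K) ∈ P := by
    have := hK 1
    rwa [LinearMap.mulLeft_one] at this
  obtain ⟨R, hR⟩ : ∃ R : Subring (Module.End k K), ∀ x, x ∈ R ↔ x ∈ P :=
    ⟨{ P with one_mem' := hone }, fun _ => Iff.rfl⟩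
  have : IsSimpleModule R K := by
    refine isSimpleModule_iff_toSpanSingleton_surjective.2 ⟨inferInstance, fun m hm y => ?_⟩
    refine ⟨⟨LinearMap.mulLeft k (y * m⁻¹), (hR _).2 (hK _)⟩, ?_⟩
    change y * m⁻¹ * m = y
    field_simp
  by_contra! hcon
  apply hP
  refine eq_top_iff.2 fun x _ => ?_
  -- the commutant of `P` consists of scalars from `k`
  have hlin : ∀ (g : Module.End R K), ∃ c : k, ∀ y, g y = c • y := by
    intro g
    have hg : ∀ y, g y = g 1 * y := by
      intro y
      have := g.map_smul (⟨LinearMap.mulLeft k y, (hR _).2 (hK _)⟩ : R) 1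
      change g (y * 1) = y * g 1 at this
      rw [mul_one] at this
      rw [this, mul_comm]
    by_cases hr : g 1 ∈ (algebraMap k K).range
    · obtain ⟨c, hc⟩ := hr
      exact ⟨c, fun y => by rw [hg, ← hc, Algebra.smul_def]⟩
    · obtain ⟨r, hrP, y, hy⟩ := hcon _ hr
      refine absurd ?_ hy
      have := g.map_smul (⟨r, (hR _).2 hrP⟩ : R) y
      change g (r y) = r (g y) at this
      rw [hg, hg y] at this
      exact this.symm
  -- hence every `x` lies in the bicommutant of `P`
  let f : Module.End (Module.End R K) K :=
    { toFun := x
      map_add' := x.map_add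
      map_smul' := fun g y => by
        obtain ⟨c, hc⟩ := hlin g
        change x (g y) = g (x y)
        rw [hc, hc, map_smul] }
  have := Fintype.ofFinite K
  obtain ⟨r, hr⟩ := jacobson_density (R := R) (M := K) f Finset.univ
  have : x = r.1 := LinearMap.ext fun y => hr y (Finset.mem_univ _)
  rw [this]
  exact (hR _).1 r.2

/-- A `k`-linear map intertwining multiplication by `τ` with multiplication by `δ` is determined by
its values on a basis of `K` over `k(τ)`. -/
lemma card_semilinear_le (τ δ : K) :
    Nat.card {h : Module.End k K // ∀ y, h (τ * y) = δ * h y} ≤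
      Nat.card K ^ (Module.finrank (IntermediateField.adjoin k {τ}) K) := by
  have : Module.Finite k K := Module.Finite.of_finite
  let b := Module.finBasis (IntermediateField.adjoin k {τ}) K
  have hinj : Function.Injective
      (fun (h : {h : Module.End k K // ∀ y, h (τ * y) = δ * h y}) i => h.1 (b i)) := by
    rintro ⟨h, hh⟩ ⟨h', hh'⟩ heq
    have heq : ∀ i, h (b i) = h' (b i) := fun i => congrFun heq i
    refine Subtype.ext (LinearMap.ext fun y => ?_)
    change h y = h' y
    have key : ∀ c ∈ Algebra.adjoin k {τ}, ∀ y, h y = h' y → h (c * y) = h' (c * y) := by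
      intro c hc
      induction hc using Algebra.adjoin_induction with
      | mem x hx =>
        obtain rfl := hx
        intro y hy; rw [hh, hh', hy]
      | algebraMap r =>
        intro y hy
        rw [← Algebra.smul_def, map_smul, map_smul, hy]
      | add x z _ _ hx hz => intro y hy; rw [add_mul, map_add, map_add, hx y hy, hz y hy]
      | mul x z _ _ hx hz => intro y hy; rw [mul_assoc]; exact hx _ (hz y hy)
    rw [← b.sum_repr y, map_sum, map_sum]
    refine Finset.sum_congr rfl fun i _ => ?_
    refine key _ ?_ _ (heq i)
    have := (b.repr y i).2
    rwa [← IntermediateField.mem_toSubalgebra,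
      IntermediateField.adjoin_simple_toSubalgebra_of_isAlgebraic
        (Algebra.IsAlgebraic.isAlgebraic τ)] at this
  refine (Nat.card_le_card_of_injective _ hinj).trans ?_
  rw [Nat.card_fun, Nat.card_fin]

/-- If the conjugate of the Singer cycle `ζ` by `h` commutes with multiplication by `δ`, then
`h⁻¹ δ h` commutes with `K`, so it is multiplication by some `τ : K`, which is a conjugate of `δ`
over `k`. -/
lemma exists_root_of_commute (ζ : Kˣ) (hζ : ∀ x : Kˣ, x ∈ Subgroup.zpowers ζ) (δ : K)
    (h : (Module.End k K)ˣ)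
    (hc : ∀ y, (h.1 * LinearMap.mulLeft k (ζ : K) * h⁻¹.1) (δ * y) =
      δ * (h.1 * LinearMap.mulLeft k (ζ : K) * h⁻¹.1) y) :
    ∃ τ ∈ (minpoly k δ).rootSet K, ∀ y, h.1 (τ * y) = δ * h.1 y := by
  have hl : ∀ y, h⁻¹.1 (h.1 y) = y := fun y => by
    rw [← Module.End.mul_apply, ← Units.val_mul, inv_mul_cancel]; rfl
  have hr : ∀ y, h.1 (h⁻¹.1 y) = y := fun y => by
    rw [← Module.End.mul_apply, ← Units.val_mul, mul_inv_cancel]; rfl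
  let m : Module.End k K := h⁻¹.1 * LinearMap.mulLeft k δ * h.1
  have hm : ∀ z, m z = h⁻¹.1 (δ * h.1 z) := fun z => rfl
  have hmζ : ∀ z, m (ζ * z) = ζ * m z := by
    intro z
    have h1 := hc (h.1 z)
    simp only [Module.End.mul_apply, LinearMap.mulLeft_apply, hl] at h1
    rw [hm, hm, ← h1, hl]
  have hmpow : ∀ (i : ℕ) z, m ((ζ : K) ^ i * z) = (ζ : K) ^ i * m z := by
    intro i
    induction i with
    | zero => simp
    | succ i ih => intro z; rw [pow_succ, mul_assoc, ih, hmζ, mul_assoc]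
  have hmul : ∀ z, m z = z * m 1 := by
    intro z
    by_cases hz : z = 0
    · simp [hz]
    · obtain ⟨i, hi⟩ := mem_powers_iff_mem_zpowers.2 (hζ (Units.mk0 z hz))
      have hi' : (ζ : K) ^ i = z := by
        have := congrArg Units.val hi
        simpa using this
      have := hmpow i 1
      rwa [hi', mul_one] at this
  have hτ : ∀ y, h.1 (m 1 * y) = δ * h.1 y := by
    intro y
    rw [mul_comm, ← hmul, hm, hr]
  refine ⟨m 1, ?_, hτ⟩
  -- `h` intertwines `p(τ)` and `p(δ)` for every polynomial `p`, in particular for `minpoly k δ`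
  have hpow : ∀ (p : Polynomial k) y,
      h.1 (Polynomial.aeval (m 1) p * y) = Polynomial.aeval δ p * h.1 y := by
    intro p
    induction p using Polynomial.induction_on with
    | C a =>
      intro y
      simp only [Polynomial.aeval_C, ← Algebra.smul_def, map_smul]
    | add p q hp hq => intro y; simp only [map_add, add_mul, hp, hq]
    | monomial i a ih =>
      intro y
      have e : ∀ x : K, Polynomial.aeval x (Polynomial.C a * Polynomial.X ^ (i + 1)) =
          Polynomial.aeval x (Polynomial.C a * Polynomial.X ^ i) * x := by
        intro x; simp [pow_succ, mul_assoc]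
      rw [e, e, mul_assoc, ih, hτ, mul_assoc]
  have : Module.Finite k K := Module.Finite.of_finite
  rw [Polynomial.mem_rootSet]
  refine ⟨minpoly.ne_zero (Algebra.IsIntegral.isIntegral δ), ?_⟩
  have h1 := hpow (minpoly k δ) 1
  rw [minpoly.aeval, zero_mul, mul_one] at h1
  rw [← hl (Polynomial.aeval (m 1) (minpoly k δ)), h1, map_zero]

/-- Among the divisors `b` of `n` in a range bounded below by a divisor `a`, the quantity
`b * q ^ (n * (n / b))` is largest at `a`. -/
lemma mul_pow_div_le {n a b q : ℕ} (hq : 2 ≤ q) (ha : 0 < a) (hab : a ≤ b) (han : a ∣ n)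
    (hbn : b ∣ n) (hn : 0 < n) : b * q ^ (n * (n / b)) ≤ a * q ^ (n * (n / a)) := by
  obtain ⟨u, rfl⟩ := han
  obtain ⟨v, hv⟩ := hbn
  have hb : 0 < b := ha.trans_le hab
  have hu : 0 < u := Nat.pos_of_mul_pos_left hn
  have hv0 : 0 < v := by
    rcases Nat.eq_zero_or_pos v with h | h
    · simp [h] at hv; omega
    · exact h
  have e1 : a * u / a = u := Nat.mul_div_cancel_left _ ha
  have e2 : a * u / b = v := by rw [hv]; exact Nat.mul_div_cancel_left _ hb
  rw [e1, e2]
  have key : (b - a) + a * u * v ≤ a * u * u := by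
    obtain ⟨c, rfl⟩ := Nat.exists_eq_add_of_le hab
    have h1 : v ≤ u := by
      by_contra! hlt
      have : a * u < (a + c) * v := by nlinarith
      omega
    obtain ⟨w, rfl⟩ := Nat.exists_eq_add_of_le h1
    -- `a * w = c * v`
    have h2 : a * w = c * v := by nlinarith
    rw [Nat.add_sub_cancel_left]
    have h3 : c ≤ c * v := Nat.le_mul_of_pos_right _ hv0
    have h4 : a * (v + w) * (v + w) = a * (v + w) * v + (v + w) * (c * v) := by
      rw [← h2]; ring
    rw [h4]
    nlinarith [Nat.le_mul_of_pos_left (c * v) hu]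
  have h5 : b ≤ a * q ^ (b - a) := by
    obtain ⟨c, rfl⟩ := Nat.exists_eq_add_of_le hab
    rw [Nat.add_sub_cancel_left]
    have : c + 1 ≤ q ^ c := (Nat.lt_pow_self (by omega : 1 < q))
    nlinarith
  calc b * q ^ (a * u * v) ≤ a * q ^ (b - a) * q ^ (a * u * v) := Nat.mul_le_mul_right _ h5
    _ = a * q ^ (b - a + a * u * v) := by rw [pow_add, mul_assoc]
    _ ≤ _ := Nat.mul_le_mul_left _ (Nat.pow_le_pow_right (by omega) key)

/-- For `δ ∉ k` of degree `b` over `k`, the units `h` conjugating the Singer cycle `ζ` into the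
centralizer of `δ` are distributed over at most `b` conjugates `τ` of `δ`, with at most
`q ^ (n * (n / b))` intertwiners for each of them, where `q = |k|`. The worst case is the smallest
prime divisor `b` of `n`. -/
lemma card_units_commute_le (n : ℕ) (hn : Module.finrank k K = n) (hn2 : 2 ≤ n)
    (ζ : Kˣ) (hζ : ∀ x : Kˣ, x ∈ Subgroup.zpowers ζ) (δ : K)
    (hδ : δ ∉ (algebraMap k K).range) :
    Nat.card {h : (Module.End k K)ˣ //
      ∀ y, (h.1 * LinearMap.mulLeft k (ζ : K) * h⁻¹.1) (δ * y) =
        δ * (h.1 * LinearMap.mulLeft k (ζ : K) * h⁻¹.1) y} ≤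
      n.minFac * Nat.card k ^ (n * (n / n.minFac)) := by
  have : Module.Finite k K := Module.Finite.of_finite
  have : Finite k := Finite.of_injective _ (algebraMap k K).injective
  have : Finite (Module.End k K) := Module.finite_of_finite k
  have := Fintype.ofFinite K
  have h_int := Algebra.IsIntegral.isIntegral (R := k) δ
  set b := (minpoly k δ).natDegree with hb
  have hbn : b ∣ n := by
    rw [hb, ← hn]; exact minpoly.degree_dvd h_int
  have hb1 : b ≠ 1 := by
    intro h1
    apply hδ
    rw [hb] at h1
    exact minpoly.natDegree_eq_one_iff.1 h1
  have hab : n.minFac ≤ b := Nat.minFac_le_of_dvd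
    (by have := minpoly.natDegree_pos h_int; omega) hbn
  have hroot : ∀ τ ∈ (minpoly k δ).rootSet K,
      Nat.card {h : Module.End k K // ∀ y, h (τ * y) = δ * h y} ≤
        Nat.card k ^ (n * (n / b)) := by
    intro τ hτ
    refine (card_semilinear_le τ δ).trans (le_of_eq ?_)
    have hτ' := (Polynomial.mem_rootSet.1 hτ).2
    have hmin : minpoly k δ = minpoly k τ :=
      minpoly.eq_of_irreducible_of_monic (minpoly.irreducible h_int) hτ' (minpoly.monic h_int)
    have hdeg : Module.finrank k (IntermediateField.adjoin k {τ}) = b := by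
      rw [IntermediateField.adjoin.finrank (Algebra.IsIntegral.isIntegral τ), hb, hmin]
    have hmul := Module.finrank_mul_finrank k (IntermediateField.adjoin k {τ}) K
    rw [hdeg, hn] at hmul
    rw [Module.natCard_eq_pow_finrank (K := k) (V := K), hn, ← pow_mul, ← hmul,
      Nat.mul_div_cancel_left _ (minpoly.natDegree_pos h_int)]
  have hfin : ∀ τ : (minpoly k δ).rootSet K, Finite
    {h : Module.End k K // ∀ y, h ((τ : K) * y) = δ * h y} := fun τ => inferInstance
  have := Fintype.ofFinite ((minpoly k δ).rootSet K)
  choose τ hτ hτ' using fun h : {h : (Module.End k K)ˣ //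
      ∀ y, (h.1 * LinearMap.mulLeft k (ζ : K) * h⁻¹.1) (δ * y) =
        δ * (h.1 * LinearMap.mulLeft k (ζ : K) * h⁻¹.1) y} =>
    exists_root_of_commute ζ hζ δ h.1 h.2
  refine (Nat.card_le_card_of_injective (β := Σ τ : (minpoly k δ).rootSet K,
    {h : Module.End k K // ∀ y, h ((τ : K) * y) = δ * h y})
    (fun h => ⟨⟨τ h, hτ h⟩, ⟨h.1.1, hτ' h⟩⟩) ?_).trans ?_
  · intro h h' heq
    have : h.1.1 = h'.1.1 :=
      congrArg (fun x : Σ τ : (minpoly k δ).rootSet K,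
        {h : Module.End k K // ∀ y, h ((τ : K) * y) = δ * h y} => x.2.1) heq
    exact Subtype.ext (Units.ext this)
  · rw [Nat.card_sigma]
    refine (Finset.sum_le_card_nsmul _ _ _ (fun τ _ => hroot τ.1 τ.2)).trans ?_
    rw [smul_eq_mul]
    have hcard : Finset.card (Finset.univ : Finset ((minpoly k δ).rootSet K)) ≤ b := by
      rw [Finset.card_univ, ← Nat.card_eq_fintype_card, Nat.card_coe_set_eq]
      exact Polynomial.ncard_rootSet_le _ _
    refine (Nat.mul_le_mul_right _ hcard).trans ?_
    exact mul_pow_div_le Finite.one_lt_card (Nat.minFac_pos n) hab (Nat.minFac_dvd n) hbn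
      (by omega)

/-- A subdirect product of a noncommutative simple ring with a commutative ring is everything:
the elements `x` with `(x, 0) ∈ T` form an ideal, which contains a nonzero commutator. -/
lemma eq_top_of_projections {R E : Type*} [Ring R] [IsSimpleRing R] [CommRing E]
    {x₀ y₀ : R} (hxy : x₀ * y₀ ≠ y₀ * x₀) (T : NonUnitalSubring (R × E))
    (hfst : ∀ r, ∃ e, (r, e) ∈ T) (hsnd : ∀ e, ∃ r, (r, e) ∈ T) : T = ⊤ := by
  let I : TwoSidedIdeal R := TwoSidedIdeal.mk' {x | (x, (0 : E)) ∈ T} T.zero_mem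
    (fun {x y} hx hy => by simpa using T.add_mem hx hy)
    (fun {x} hx => by simpa using T.neg_mem hx)
    (fun {x y} hy => by
      obtain ⟨e, he⟩ := hfst x
      simpa using T.mul_mem he hy)
    (fun {x y} hx => by
      obtain ⟨e, he⟩ := hfst y
      simpa using T.mul_mem hx he)
  have hI : ∀ x, x ∈ I ↔ (x, (0 : E)) ∈ T := fun x => by
    simp only [I, TwoSidedIdeal.mem_mk', Set.mem_ofPred_eq]
  have hne : I ≠ ⊥ := by
    intro hbot
    obtain ⟨e, he⟩ := hfst x₀
    obtain ⟨f, hf⟩ := hfst y₀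
    have hc : x₀ * y₀ - y₀ * x₀ ∈ I := by
      rw [hI]
      have := T.sub_mem (T.mul_mem he hf) (T.mul_mem hf he)
      simpa [mul_comm f e] using this
    rw [hbot, TwoSidedIdeal.mem_bot, sub_eq_zero] at hc
    exact hxy hc
  have htop : I = ⊤ := (IsSimpleOrder.eq_bot_or_eq_top I).resolve_left hne
  refine eq_top_iff.2 ?_
  rintro ⟨r, e⟩ -
  obtain ⟨s, hs⟩ := hsnd e
  have h1 : (r - s, (0 : E)) ∈ T := by
    rw [← hI, htop]; trivial
  simpa using T.add_mem h1 hs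

lemma exists_noncomm_end (hn2 : 2 ≤ Module.finrank k K) :
    ∃ x y : Module.End k K, x * y ≠ y * x := by
  by_contra! hcon
  have hfin : Module.Finite k K := Module.Finite.of_finite
  -- a functional `f` with `f 1 ≠ 0`, a nonzero `c` in its kernel, and the endomorphisms
  -- `x ↦ c * x` and `x ↦ f x • 1` do not commute
  obtain ⟨f, hf⟩ : ∃ f : K →ₗ[k] k, f 1 ≠ 0 := by
    by_contra! hall
    exact one_ne_zero ((Module.forall_dual_apply_eq_zero_iff k (1 : K)).1 hall)
  have hker : LinearMap.ker f ≠ ⊥ := by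
    intro hbot
    have := LinearMap.finrank_le_finrank_of_injective (LinearMap.ker_eq_bot.1 hbot)
    rw [Module.finrank_self] at this
    omega
  obtain ⟨c, hc, hc0⟩ := Submodule.exists_mem_ne_zero_of_ne_bot hker
  have h2 := LinearMap.congr_fun (hcon (LinearMap.mulLeft k c)
    ((LinearMap.toSpanSingleton k K 1) ∘ₗ f)) 1
  simp only [Module.End.mul_apply, LinearMap.mulLeft_apply, LinearMap.comp_apply,
    LinearMap.toSpanSingleton_apply, mul_one, LinearMap.mem_ker.1 hc, zero_smul] at h2
  rw [Algebra.smul_def, mul_one] at h2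
  rcases mul_eq_zero.1 h2 with h | h
  · exact hc0 h
  · exact hf ((map_eq_zero _).1 h)

lemma isSimpleRing_end : IsSimpleRing (Module.End k K) := by
  have : Module.Finite k K := Module.Finite.of_finite
  have : Nonempty (Fin (Module.finrank k K)) := ⟨⟨0, Module.finrank_pos⟩⟩
  exact IsSimpleRing.of_surjective
    (algEquivMatrix (Module.finBasis k K)).symm.toRingEquiv.toRingHom inferInstance
    (algEquivMatrix (Module.finBasis k K)).symm.surjective

/-- A proper subring of `Module.End k K × E` contains few elements of the form `(h ζ h⁻¹, β)`.
If it contains one, its second projection is onto, hence its first one is proper; up to conjugation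
the latter contains `K`, so it centralizes some `δ ∉ k`. -/
lemma card_stabilizing_le {E : Type*} [Field E] (n : ℕ) (hn : Module.finrank k K = n)
    (hn2 : 2 ≤ n) (ζ : Kˣ) (hζ : ∀ x : Kˣ, x ∈ Subgroup.zpowers ζ)
    (β : Eˣ) (hβ : ∀ x : Eˣ, ∃ i : ℕ, β ^ i = x)
    (T : NonUnitalSubring (Module.End k K × E)) (hT : T ≠ ⊤) :
    Nat.card {h : (Module.End k K)ˣ //
      (h.1 * LinearMap.mulLeft k (ζ : K) * h⁻¹.1, (β : E)) ∈ T} ≤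
      n.minFac * Nat.card k ^ (n * (n / n.minFac)) := by
  have : Module.Finite k K := Module.Finite.of_finite
  have : Finite k := Finite.of_injective _ (algebraMap k K).injective
  have : Finite (Module.End k K) := Module.finite_of_finite k
  have := isSimpleRing_end (k := k) (K := K)
  rcases isEmpty_or_nonempty {h : (Module.End k K)ˣ //
      (h.1 * LinearMap.mulLeft k (ζ : K) * h⁻¹.1, (β : E)) ∈ T} with hem | ⟨⟨g, hg⟩⟩
  · rw [Nat.card_of_isEmpty]; exact Nat.zero_le _
  set S : Module.End k K := LinearMap.mulLeft k (ζ : K) with hS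
  have hgi : ∀ x : Module.End k K, g⁻¹.1 * (g.1 * x) = x := Units.inv_mul_cancel_left g
  have hgi' : ∀ x : Module.End k K, g.1 * (g⁻¹.1 * x) = x := Units.mul_inv_cancel_left g
  -- the first projection of `T`, conjugated so that it contains multiplication by `ζ`
  let P : NonUnitalSubring (Module.End k K) :=
    { carrier := {r | ∃ e, (g.1 * r * g⁻¹.1, e) ∈ T}
      zero_mem' := ⟨0, by
        rw [mul_zero, zero_mul]; exact T.zero_mem⟩
      add_mem' := by
        rintro a b ⟨e, he⟩ ⟨f, hf⟩
        exact ⟨e + f, by simpa [mul_add, add_mul] using T.add_mem he hf⟩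
      neg_mem' := by
        rintro a ⟨e, he⟩
        have h1 : g.1 * -a * g⁻¹.1 = -(g.1 * a * g⁻¹.1) :=
          LinearMap.ext fun y => map_neg g.1 _
        exact ⟨-e, h1 ▸ T.neg_mem he⟩
      mul_mem' := by
        rintro a b ⟨e, he⟩ ⟨f, hf⟩
        refine ⟨e * f, ?_⟩
        have := T.mul_mem he hf
        rw [Prod.mk_mul_mk] at this
        simpa only [mul_assoc, hgi] using this }
  have hPmem : ∀ r, r ∈ P ↔ ∃ e, (g.1 * r * g⁻¹.1, e) ∈ T := fun r => Iff.rfl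
  have hpow : ∀ i : ℕ, (g.1 * S ^ (i + 1) * g⁻¹.1, (β : E) ^ (i + 1)) ∈ T := by
    intro i
    induction i with
    | zero => simpa using hg
    | succ i ih =>
      have := T.mul_mem ih hg
      rw [Prod.mk_mul_mk, ← pow_succ] at this
      simpa only [mul_assoc, hgi, pow_succ] using this
  have hPtop : P ≠ ⊤ := by
    intro htop
    apply hT
    obtain ⟨x, y, hxy⟩ := exists_noncomm_end (k := k) (K := K) (hn ▸ hn2)
    refine eq_top_of_projections hxy T (fun r => ?_) (fun e => ?_)
    · have : g⁻¹.1 * r * g.1 ∈ P := htop ▸ trivial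
      obtain ⟨e, he⟩ := (hPmem _).1 this
      refine ⟨e, ?_⟩
      have h2 : g.1 * (g⁻¹.1 * r * g.1) * g⁻¹.1 = r := by
        rw [mul_assoc, mul_assoc _ g.1, Units.mul_inv, mul_one, hgi']
      rwa [h2] at he
    · by_cases he : e = 0
      · exact ⟨0, he ▸ T.zero_mem⟩
      · obtain ⟨i, hi⟩ := hβ (Units.mk0 e he * β⁻¹)
        have h3 : (β : E) ^ (i + 1) = e := by
          have : β ^ (i + 1) = Units.mk0 e he := by rw [pow_succ, hi, inv_mul_cancel_right]
          simpa using congrArg Units.val this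
        exact ⟨_, h3 ▸ hpow i⟩
  have hPK : ∀ c : K, LinearMap.mulLeft k c ∈ P := by
    intro c
    by_cases hc : c = 0
    · subst hc
      rw [LinearMap.mulLeft_zero_eq_zero]; exact P.zero_mem
    · obtain ⟨i, hi⟩ := mem_powers_iff_mem_zpowers.2 (hζ (Units.mk0 c hc * ζ⁻¹))
      have hi : ζ ^ i = Units.mk0 c hc * ζ⁻¹ := hi
      have h3 : (ζ : K) ^ (i + 1) = c := by
        have : ζ ^ (i + 1) = Units.mk0 c hc := by rw [pow_succ, hi, inv_mul_cancel_right]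
        simpa using congrArg Units.val this
      rw [← h3, ← LinearMap.pow_mulLeft]
      exact (hPmem _).2 ⟨_, hpow i⟩
  obtain ⟨δ, hδ, hcomm⟩ := exists_centralizing P hPtop hPK
  refine (Nat.card_le_card_of_injective (β := {h : (Module.End k K)ˣ //
      ∀ y, (h.1 * LinearMap.mulLeft k (ζ : K) * h⁻¹.1) (δ * y) =
        δ * (h.1 * LinearMap.mulLeft k (ζ : K) * h⁻¹.1) y})
      (fun h => ⟨g⁻¹ * h.1, ?_⟩) ?_).trans (card_units_commute_le n hn hn2 ζ hζ δ hδ)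
  · refine hcomm _ ((hPmem _).2 ⟨β, ?_⟩)
    have := h.2
    rw [← hS, mul_inv_rev, inv_inv]
    have e : g.1 * ((g⁻¹ * h.1).1 * S * (h.1⁻¹ * g).1) * g⁻¹.1 = h.1.1 * S * h.1⁻¹.1 := by
      simp only [Units.val_mul, mul_assoc, hgi', Units.mul_inv, mul_one]
    rw [e]; exact this
  · intro h h' heq
    have h1 : g⁻¹ * h.1 = g⁻¹ * h'.1 := congrArg Subtype.val heq
    exact Subtype.ext (mul_left_cancel h1)

/-- Lower bound for the size of a cover, obtained by distributing the elements `(h ζ h⁻¹, β)` over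
its members. -/
lemma card_units_le_of_cover {E : Type*} [Field E] [Finite E] (n : ℕ)
    (hn : Module.finrank k K = n) (hn2 : 2 ≤ n)
    (C : Finset (NonUnitalSubring (Module.End k K × E)))
    (hC : IsRingCover (Module.End k K × E) C) :
    Nat.card (Module.End k K)ˣ ≤
      C.card * (n.minFac * Nat.card k ^ (n * (n / n.minFac))) := by
  have : Module.Finite k K := Module.Finite.of_finite
  have : Finite k := Finite.of_injective _ (algebraMap k K).injective
  have : Finite (Module.End k K) := Module.finite_of_finite k
  obtain ⟨ζ, hζ⟩ := IsCyclic.exists_generator (α := Kˣ)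
  obtain ⟨β, hβ⟩ := IsCyclic.exists_generator (α := Eˣ)
  choose T hT hmem using fun h : (Module.End k K)ˣ =>
    hC.2 (h.1 * LinearMap.mulLeft k (ζ : K) * h⁻¹.1, (β : E))
  refine (Nat.card_le_card_of_injective (β := Σ T : C, {h : (Module.End k K)ˣ //
      (h.1 * LinearMap.mulLeft k (ζ : K) * h⁻¹.1, (β : E)) ∈ T.1})
      (fun h => ⟨⟨T h, hT h⟩, ⟨h, hmem h⟩⟩) ?_).trans ?_
  · intro h h' heq
    exact congrArg (fun x : Σ T : C, {h : (Module.End k K)ˣ //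
      (h.1 * LinearMap.mulLeft k (ζ : K) * h⁻¹.1, (β : E)) ∈ T.1} => x.2.1) heq
  · rw [Nat.card_sigma]
    refine (Finset.sum_le_card_nsmul _ _ _ (fun T _ =>
      card_stabilizing_le n hn hn2 ζ hζ β
        (fun x => mem_powers_iff_mem_zpowers.2 (hβ x)) T.1 (hC.1 T.1 T.2))).trans ?_
    rw [smul_eq_mul, Finset.card_univ, Fintype.card_coe]

lemma card_units_end (n : ℕ) (hn : Module.finrank k K = n) :
    Nat.card (Module.End k K)ˣ =
      ∏ i : Fin n, (Nat.card k ^ n - Nat.card k ^ (i : ℕ)) := by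
  have : Module.Finite k K := Module.Finite.of_finite
  have : Finite k := Finite.of_injective _ (algebraMap k K).injective
  have := Fintype.ofFinite k
  subst hn
  rw [Nat.card_congr (Units.mapEquiv
    (algEquivMatrix (Module.finBasis k K)).toRingEquiv.toMulEquiv).toEquiv]
  rw [Nat.card_eq_fintype_card (α := k)]
  exact Matrix.card_GL_field _

end Lower

/-! ### Upper bound: a cover of `AGL n F1 F2` -/

section Upper

open scoped Matrix

variable {n : ℕ} {F : Type*} [Field F] {F1 F2 : Subfield F}

/-- The top-left `n × n` block, regarded as a matrix over `F`. -/
def aglBlock (x : AGL n F1 F2) : Matrix (Fin n) (Fin n) F :=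
  x.1.submatrix Fin.castSucc Fin.castSucc

/-- The top-right column. -/
def aglCol (x : AGL n F1 F2) : Fin n → F := fun i => x.1 i.castSucc (Fin.last n)

/-- The bottom-right entry, regarded as an element of `F`. -/
def aglCorner (x : AGL n F1 F2) : F := x.1 (Fin.last n) (Fin.last n)

/-- The element with block `M`, column `v` and corner `b`. -/
def aglMk (M : Matrix (Fin n) (Fin n) F1) (v : Fin n → F) (b : F2) : AGL n F1 F2 :=
  ⟨Matrix.of (Fin.lastCases (Fin.lastCases (b : F) (fun _ => 0))
      (fun i => Fin.lastCases (v i) (fun j => (M i j : F)))), by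
    refine ⟨fun i j => ?_, fun j => ?_, ?_⟩ <;> simp⟩

lemma aglBlock_mk (M : Matrix (Fin n) (Fin n) F1) (v : Fin n → F) (b : F2) :
    aglBlock (aglMk M v b) = M.map (↑) := by
  ext i j; simp [aglBlock, aglMk]

lemma aglCol_mk (M : Matrix (Fin n) (Fin n) F1) (v : Fin n → F) (b : F2) :
    aglCol (aglMk M v b) = v := by
  ext i; simp [aglCol, aglMk]

lemma aglCorner_mk (M : Matrix (Fin n) (Fin n) F1) (v : Fin n → F) (b : F2) :
    aglCorner (aglMk M v b) = b := by
  simp [aglCorner, aglMk]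

lemma agl_ext {x y : AGL n F1 F2} (h1 : aglBlock x = aglBlock y) (h2 : aglCol x = aglCol y)
    (h3 : aglCorner x = aglCorner y) : x = y := by
  refine Subtype.ext (Matrix.ext fun i j => ?_)
  induction i using Fin.lastCases with
  | last =>
    induction j using Fin.lastCases with
    | last => exact h3
    | cast j => rw [x.2.2.1 j, y.2.2.1 j]
  | cast i =>
    induction j using Fin.lastCases with
    | last => exact congrFun h2 i
    | cast j => exact congrFun (congrFun h1 i) j

lemma aglBlock_add (x y : AGL n F1 F2) : aglBlock (x + y) = aglBlock x + aglBlock y := rfl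
lemma aglCol_add (x y : AGL n F1 F2) : aglCol (x + y) = aglCol x + aglCol y := rfl
lemma aglCorner_add (x y : AGL n F1 F2) : aglCorner (x + y) = aglCorner x + aglCorner y := rfl
lemma aglBlock_neg (x : AGL n F1 F2) : aglBlock (-x) = -aglBlock x := rfl
lemma aglCol_neg (x : AGL n F1 F2) : aglCol (-x) = -aglCol x := rfl
lemma aglCorner_neg (x : AGL n F1 F2) : aglCorner (-x) = -aglCorner x := rfl
lemma aglBlock_zero : aglBlock (0 : AGL n F1 F2) = 0 := rfl
lemma aglCol_zero : aglCol (0 : AGL n F1 F2) = 0 := rfl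
lemma aglCorner_zero : aglCorner (0 : AGL n F1 F2) = 0 := rfl

lemma aglBlock_mul (x y : AGL n F1 F2) : aglBlock (x * y) = aglBlock x * aglBlock y := by
  ext i j
  change (x.1 * y.1) i.castSucc j.castSucc = _
  rw [Matrix.mul_apply, Fin.sum_univ_castSucc, y.2.2.1 j, mul_zero, add_zero]
  rfl

lemma aglCol_mul (x y : AGL n F1 F2) :
    aglCol (x * y) = aglBlock x *ᵥ aglCol y + aglCorner y • aglCol x := by
  ext i
  change (x.1 * y.1) i.castSucc (Fin.last n) = _
  rw [Matrix.mul_apply, Fin.sum_univ_castSucc, mul_comm (x.1 i.castSucc (Fin.last n))]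
  rfl

lemma aglCorner_mul (x y : AGL n F1 F2) : aglCorner (x * y) = aglCorner x * aglCorner y := by
  change (x.1 * y.1) (Fin.last n) (Fin.last n) = _
  rw [Matrix.mul_apply, Fin.sum_univ_castSucc,
    Finset.sum_eq_zero (fun k _ => by rw [x.2.2.1 k, zero_mul]), zero_add]
  rfl

/-- The complement of the radical attached to `w`: the elements stabilizing the line spanned by the
vector `(-w, 1)` of `F ^ (n + 1)`. These are the conjugates of the block-diagonal subring by
unipotent elements. -/
def aglComplement (F1 F2 : Subfield F) (w : Fin n → F) : NonUnitalSubring (AGL n F1 F2) where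
  carrier := {x | aglCol x = aglBlock x *ᵥ w - aglCorner x • w}
  zero_mem' := by simp [aglBlock_zero, aglCol_zero, aglCorner_zero]
  add_mem' := by
    intro x y hx hy
    simp only [Set.mem_ofPred_eq] at *
    rw [aglBlock_add, aglCol_add, aglCorner_add, hx, hy, Matrix.add_mulVec, add_smul]
    abel
  neg_mem' := by
    intro x hx
    simp only [Set.mem_ofPred_eq] at *
    rw [aglBlock_neg, aglCol_neg, aglCorner_neg, hx, Matrix.neg_mulVec, neg_smul]
    abel
  mul_mem' := by
    intro x y hx hy
    simp only [Set.mem_ofPred_eq] at *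
    rw [aglBlock_mul, aglCol_mul, aglCorner_mul, hx, hy, Matrix.mulVec_sub, Matrix.mulVec_smul,
      Matrix.mulVec_mulVec, smul_sub, smul_smul, mul_comm (aglCorner y)]
    abel

/-- The elements whose block has `u` as a left eigenvector, with eigenvalue the corner entry. -/
def aglEigen (F1 F2 : Subfield F) (u : Fin n → F) : NonUnitalSubring (AGL n F1 F2) where
  carrier := {x | u ᵥ* aglBlock x = aglCorner x • u}
  zero_mem' := by simp [aglBlock_zero, aglCorner_zero]
  add_mem' := by
    intro x y hx hy
    simp only [Set.mem_ofPred_eq] at *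
    rw [aglBlock_add, aglCorner_add, Matrix.vecMul_add, hx, hy, add_smul]
  neg_mem' := by
    intro x hx
    simp only [Set.mem_ofPred_eq] at *
    rw [aglBlock_neg, aglCorner_neg, Matrix.vecMul_neg, hx, neg_smul]
  mul_mem' := by
    intro x y hx hy
    simp only [Set.mem_ofPred_eq] at *
    rw [aglBlock_mul, aglCorner_mul, ← Matrix.vecMul_vecMul, hx, Matrix.smul_vecMul, hy,
      smul_smul]

lemma mem_aglComplement {w : Fin n → F} {x : AGL n F1 F2} :
    x ∈ aglComplement F1 F2 w ↔ aglCol x = aglBlock x *ᵥ w - aglCorner x • w := Iff.rfl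

lemma mem_aglEigen {u : Fin n → F} {x : AGL n F1 F2} :
    x ∈ aglEigen F1 F2 u ↔ u ᵥ* aglBlock x = aglCorner x • u := Iff.rfl

lemma aglEigen_smul {u : Fin n → F} {c : F} (hc : c ≠ 0) :
    aglEigen F1 F2 (c • u) = aglEigen F1 F2 u := by
  ext x
  rw [mem_aglEigen, mem_aglEigen, Matrix.smul_vecMul, smul_comm]
  exact (smul_right_injective (Fin n → F) hc).eq_iff

lemma aglComplement_ne_top (hn : 0 < n) (w : Fin n → F) :
    aglComplement F1 F2 w ≠ ⊤ := by
  intro htop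
  have : aglMk (0 : Matrix (Fin n) (Fin n) F1) (fun _ => 1) (0 : F2) ∈ aglComplement F1 F2 w :=
    htop ▸ trivial
  rw [mem_aglComplement, aglCol_mk, aglBlock_mk, aglCorner_mk] at this
  simpa using congrFun this ⟨0, hn⟩

lemma aglEigen_ne_top {u : Fin n → F} (hu : u ≠ 0) : aglEigen F1 F2 u ≠ ⊤ := by
  intro htop
  have : aglMk (0 : Matrix (Fin n) (Fin n) F1) 0 (1 : F2) ∈ aglEigen F1 F2 u :=
    htop ▸ trivial
  rw [mem_aglEigen, aglBlock_mk, aglCorner_mk] at this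
  simp at this
  exact hu this.symm

/-- If the corner `b` is not an eigenvalue of the block `M`, then `M - b` is invertible and
`(M - b) w = col` can be solved for `w`; otherwise `M` has a left eigenvector for `b`. -/
lemma exists_mem_complement_or_eigen (x : AGL n F1 F2) :
    (∃ w, x ∈ aglComplement F1 F2 w) ∨ ∃ u, u ≠ 0 ∧ x ∈ aglEigen F1 F2 u := by
  by_cases hdet : (aglBlock x - aglCorner x • (1 : Matrix (Fin n) (Fin n) F)).det = 0
  · right
    obtain ⟨u, hu, hux⟩ := Matrix.exists_vecMul_eq_zero_iff.2 hdet
    refine ⟨u, hu, ?_⟩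
    rw [mem_aglEigen]
    rwa [Matrix.vecMul_sub, Matrix.vecMul_smul, Matrix.vecMul_one, sub_eq_zero] at hux
  · left
    set B := aglBlock x - aglCorner x • (1 : Matrix (Fin n) (Fin n) F) with hB
    refine ⟨B⁻¹ *ᵥ aglCol x, ?_⟩
    rw [mem_aglComplement]
    have h1 : B *ᵥ (B⁻¹ *ᵥ aglCol x) = aglCol x := by
      rw [Matrix.mulVec_mulVec, Matrix.mul_nonsing_inv _ (isUnit_iff_ne_zero.2 hdet),
        Matrix.one_mulVec]
    conv_lhs => rw [← h1]
    rw [hB, Matrix.sub_mulVec, Matrix.smul_mulVec, Matrix.one_mulVec]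

/-- One complement for each vector of `F ^ n` and one eigenvector subring for each point of the
projective space suffice to cover `AGL n F1 F2`. -/
lemma coveringNumber_agl_le [Finite F] (hn : 0 < n) :
    coveringNumber (AGL n F1 F2) ≤
      ((Nat.card F ^ n + Nat.card (Projectivization F (Fin n → F)) : ℕ) : ℕ∞) := by
  have := Fintype.ofFinite F
  have := Fintype.ofFinite (Projectivization F (Fin n → F))
  let C₁ : Finset (NonUnitalSubring (AGL n F1 F2)) :=
    Finset.univ.image (fun w : Fin n → F => aglComplement F1 F2 w)
  let C₂ : Finset (NonUnitalSubring (AGL n F1 F2)) :=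
    Finset.univ.image (fun P : Projectivization F (Fin n → F) => aglEigen F1 F2 P.rep)
  have hcard : ((C₁ ∪ C₂).card : ℕ∞) ≤
      ((Nat.card F ^ n + Nat.card (Projectivization F (Fin n → F)) : ℕ) : ℕ∞) := by
    refine Nat.cast_le.2 ((Finset.card_union_le _ _).trans (Nat.add_le_add ?_ ?_))
    · refine Finset.card_image_le.trans (le_of_eq ?_)
      rw [Finset.card_univ, ← Nat.card_eq_fintype_card, Nat.card_fun, Nat.card_fin]
    · refine Finset.card_image_le.trans (le_of_eq ?_)
      rw [Finset.card_univ, ← Nat.card_eq_fintype_card]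
  refine le_trans (sInf_le ?_) hcard
  refine ⟨C₁ ∪ C₂, ⟨?_, ?_⟩, rfl⟩
  · intro S hS
    rcases Finset.mem_union.1 hS with hS | hS
    · obtain ⟨w, -, rfl⟩ := Finset.mem_image.1 hS
      exact aglComplement_ne_top hn w
    · obtain ⟨P, -, rfl⟩ := Finset.mem_image.1 hS
      exact aglEigen_ne_top P.rep_nonzero
  · intro x
    rcases exists_mem_complement_or_eigen x with ⟨w, hw⟩ | ⟨u, hu, hux⟩
    · exact ⟨_, Finset.mem_union_left _ (Finset.mem_image_of_mem _ (Finset.mem_univ w)), hw⟩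
    · refine ⟨_, Finset.mem_union_right _ (Finset.mem_image_of_mem _
        (Finset.mem_univ (Projectivization.mk F u hu))), ?_⟩
      obtain ⟨a, ha⟩ := Projectivization.exists_smul_eq_mk_rep F u hu
      rw [← ha]
      change x ∈ aglEigen F1 F2 ((a : F) • u)
      rwa [aglEigen_smul a.ne_zero]

/-! ### Quotients of `AGL n F1 F2` -/

/-- The projection onto the semisimple quotient. -/
def aglProj (n : ℕ) (F1 F2 : Subfield F) : AGL n F1 F2 →+* Matrix (Fin n) (Fin n) F1 × F2 where
  toFun x := (Matrix.of fun i j => ⟨x.1 i.castSucc j.castSucc, x.2.1 i j⟩,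
    ⟨x.1 (Fin.last n) (Fin.last n), x.2.2.2⟩)
  map_one' := by
    refine Prod.ext (Matrix.ext fun i j => Subtype.ext ?_) (Subtype.ext ?_)
    · simp [Matrix.one_apply, apply_ite]
    · simp
  map_zero' := rfl
  map_add' x y := rfl
  map_mul' x y := by
    refine Prod.ext (Matrix.ext fun i j => Subtype.ext ?_) (Subtype.ext (aglCorner_mul x y))
    refine (congrFun (congrFun (aglBlock_mul x y) i) j).trans ?_
    simp [Matrix.mul_apply, aglBlock]

lemma aglProj_mk (M : Matrix (Fin n) (Fin n) F1) (v : Fin n → F) (b : F2) :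
    aglProj n F1 F2 (aglMk M v b) = (M, b) := by
  refine Prod.ext (Matrix.ext fun i j => Subtype.ext ?_) (Subtype.ext (aglCorner_mk M v b))
  exact congrFun (congrFun (aglBlock_mk M v b) i) j

lemma aglProj_surjective : Function.Surjective (aglProj n F1 F2) :=
  fun ⟨M, b⟩ => ⟨aglMk M 0 b, aglProj_mk M 0 b⟩

lemma eq_mk_of_aglProj_eq_zero {x : AGL n F1 F2} (hx : aglProj n F1 F2 x = 0) :
    x = aglMk 0 (aglCol x) 0 := by
  refine agl_ext ?_ (aglCol_mk _ _ _).symm ?_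
  · rw [aglBlock_mk]
    ext i j
    have := congrFun (congrFun (congrArg Prod.fst hx) i) j
    exact congrArg Subtype.val this
  · rw [aglCorner_mk]
    exact congrArg (fun y : Matrix (Fin n) (Fin n) F1 × F2 => (y.2 : F)) hx

lemma aglMk_mul_mk (M N : Matrix (Fin n) (Fin n) F1) (v w : Fin n → F) (b c : F2) :
    aglMk M v b * aglMk N w c =
      aglMk (M * N) (M.map (↑) *ᵥ w + (c : F) • v) (b * c) := by
  refine agl_ext ?_ ?_ ?_
  · rw [aglBlock_mul, aglBlock_mk, aglBlock_mk, aglBlock_mk]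
    ext i j; simp [Matrix.mul_apply]
  · rw [aglCol_mul, aglBlock_mk, aglCol_mk, aglCol_mk, aglCol_mk, aglCorner_mk]
  · rw [aglCorner_mul, aglCorner_mk, aglCorner_mk, aglCorner_mk]; rfl

lemma aglMk_zero_add (v w : Fin n → F) :
    aglMk (0 : Matrix (Fin n) (Fin n) F1) (v + w) (0 : F2) = aglMk 0 v 0 + aglMk 0 w 0 := by
  refine agl_ext ?_ ?_ ?_
  · simp [aglBlock_add, aglBlock_mk]
  · simp [aglCol_add, aglCol_mk]
  · simp [aglCorner_add, aglCorner_mk]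

/-- A nonzero ideal contains a nonzero element supported in the last column. -/
lemma exists_col_mem_of_ne_bot (hn : 0 < n) (I : TwoSidedIdeal (AGL n F1 F2)) (hI : I ≠ ⊥) :
    ∃ v : Fin n → F, v ≠ 0 ∧ aglMk 0 v 0 ∈ I := by
  obtain ⟨x, hxI, hx0⟩ : ∃ x ∈ I, x ≠ 0 := by
    by_contra! hall
    apply hI
    refine le_bot_iff.1 fun x hx => ?_
    rw [TwoSidedIdeal.mem_bot]
    exact hall x hx
  by_cases hp : aglProj n F1 F2 x = 0
  · refine ⟨aglCol x, fun hv => hx0 ?_, eq_mk_of_aglProj_eq_zero hp ▸ hxI⟩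
    rw [eq_mk_of_aglProj_eq_zero hp, hv]
    exact agl_ext (by simp [aglBlock_mk, aglBlock_zero]) (by simp [aglCol_mk, aglCol_zero])
      (by simp [aglCorner_mk, aglCorner_zero])
  · by_cases hM : aglBlock x = 0
    · have hb : aglCorner x ≠ 0 := by
        intro hb
        apply hp
        refine Prod.ext (Matrix.ext fun i j => Subtype.ext ?_) (Subtype.ext hb)
        exact congrFun (congrFun hM i) j
      refine ⟨aglCorner x • (fun _ => 1), fun h => ?_, ?_⟩
      · have := congrFun h ⟨0, hn⟩
        simp at this
        exact hb this
      · have := I.mul_mem_left (aglMk 0 (fun _ => 1) 0) x hxI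
        convert this using 1
        refine agl_ext ?_ ?_ ?_
        · simp [aglBlock_mul, aglBlock_mk]
        · simp [aglCol_mul, aglCol_mk, aglBlock_mk]
        · simp [aglCorner_mul, aglCorner_mk]
    · obtain ⟨w, hw⟩ : ∃ w, aglBlock x *ᵥ w ≠ 0 := by
        by_contra! hall
        exact hM (Matrix.ext_of_mulVec_single fun i => by rw [hall, Matrix.zero_mulVec])
      refine ⟨aglBlock x *ᵥ w, hw, ?_⟩
      have := I.mul_mem_right x (aglMk 0 w 0) hxI
      convert this using 1
      refine agl_ext ?_ ?_ ?_
      · simp [aglBlock_mul, aglBlock_mk]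
      · simp [aglCol_mul, aglCol_mk, aglCorner_mk]
      · simp [aglCorner_mul, aglCorner_mk]

/-- Every nonzero ideal contains the whole last column, that is, the kernel of `aglProj`: since `F`
is the compositum of `F1` and `F2`, the last column is a minimal two-sided ideal. -/
lemma aglProj_ker_le [Finite F] (hcomp : F1 ⊔ F2 = ⊤) (hn : 0 < n)
    (I : TwoSidedIdeal (AGL n F1 F2)) (hI : I ≠ ⊥) (x : AGL n F1 F2)
    (hx : aglProj n F1 F2 x = 0) : x ∈ I := by
  obtain ⟨v, hv, hvI⟩ := exists_col_mem_of_ne_bot hn I hI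
  have := Fintype.ofFinite F
  let N : Set F := {y | ∀ j : Fin n,
    aglMk (0 : Matrix (Fin n) (Fin n) F1) (Pi.single j y) (0 : F2) ∈ I}
  have hNadd : ∀ y ∈ N, ∀ z ∈ N, y + z ∈ N := by
    intro y hy z hz j
    rw [Pi.single_add, aglMk_zero_add]
    exact I.add_mem (hy j) (hz j)
  have hN1 : ∀ c ∈ F1, ∀ y ∈ N, c * y ∈ N := by
    intro c hc y hy j
    have := I.mul_mem_left (aglMk (Matrix.scalar (Fin n) (⟨c, hc⟩ : F1)) 0 (0 : F2)) _ (hy j)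
    rw [aglMk_mul_mk] at this
    convert this using 2
    · simp
    · ext i
      simp [Matrix.diagonal_map, Matrix.scalar_apply, Pi.single_apply, mul_comm]
    · simp
  have hN2 : ∀ c ∈ F2, ∀ y ∈ N, c * y ∈ N := by
    intro c hc y hy j
    have := I.mul_mem_right _ (aglMk 0 0 (⟨c, hc⟩ : F2)) (hy j)
    rw [aglMk_mul_mk] at this
    convert this using 2
    · simp
    · ext i
      simp [Pi.single_apply]
    · simp
  -- the multipliers of `N` form a subfield containing `F1` and `F2`
  let H : Subfield F :=
    { carrier := {c | ∀ y ∈ N, c * y ∈ N}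
      mul_mem' := fun {a b} ha hb y hy => by rw [mul_assoc]; exact ha _ (hb _ hy)
      one_mem' := fun y hy => by rwa [one_mul]
      add_mem' := fun {a b} ha hb y hy => by
        rw [add_mul]; exact hNadd _ (ha y hy) _ (hb y hy)
      zero_mem' := fun y hy => by
        simpa using hN1 0 F1.zero_mem y hy
      neg_mem' := fun {a} ha y hy => by
        have := hN1 (-1) (F1.neg_mem F1.one_mem) _ (ha y hy)
        simpa using this
      inv_mem' := fun a ha y hy => by
        by_cases h0 : a = 0
        · subst h0; simpa using hN1 0 F1.zero_mem y hy
        · have hpow : ∀ i : ℕ, ∀ y ∈ N, a ^ i * y ∈ N := by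
            intro i
            induction i with
            | zero => intro y hy; simpa using hy
            | succ i ih => intro y hy; rw [pow_succ, mul_assoc]; exact ih _ (ha _ hy)
          have h1 := FiniteField.pow_card_sub_one_eq_one a h0
          have h2 : a⁻¹ = a ^ (Fintype.card F - 2) := by
            have h3 : Fintype.card F - 1 = Fintype.card F - 2 + 1 := by
              have := Fintype.one_lt_card (α := F); omega
            rw [h3, pow_succ] at h1
            exact (eq_inv_of_mul_eq_one_left h1).symm
          rw [h2]; exact hpow _ _ hy }
  have hH : H = ⊤ := by
    refine top_le_iff.1 (hcomp ▸ sup_le ?_ ?_)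
    · exact fun c hc => hN1 c hc
    · exact fun c hc => hN2 c hc
  obtain ⟨i, hi⟩ := Function.ne_iff.1 hv
  have hvi : v i ∈ N := by
    intro j
    have := I.mul_mem_left (aglMk (Matrix.single j i (1 : F1)) 0 (0 : F2)) _ hvI
    rw [aglMk_mul_mk] at this
    convert this using 2
    · simp
    · ext l
      have hmap : (Matrix.single j i (1 : F1)).map Subtype.val = Matrix.single j i (1 : F) := by
        ext a b
        simp only [Matrix.map_apply, Matrix.single_apply]
        split_ifs <;> rfl
      rw [hmap]
      simp [Matrix.single_mulVec, Function.update_apply, Pi.single_apply]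
    · simp
  have hNtop : ∀ y, y ∈ N := by
    intro y
    have : y * (v i)⁻¹ ∈ H := hH ▸ trivial
    have := this _ hvi
    rwa [mul_assoc, inv_mul_cancel₀ hi, mul_one] at this
  rw [eq_mk_of_aglProj_eq_zero hx]
  generalize aglCol x = w
  have hsum : ∀ s : Finset (Fin n),
      aglMk (0 : Matrix (Fin n) (Fin n) F1) (∑ j ∈ s, Pi.single j (w j)) (0 : F2) ∈ I := by
    intro s
    induction s using Finset.induction_on with
    | empty =>
      rw [Finset.sum_empty]
      convert I.zero_mem using 1
      exact agl_ext (by simp [aglBlock_mk, aglBlock_zero]) (by simp [aglCol_mk, aglCol_zero])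
        (by simp [aglCorner_mk, aglCorner_zero])
    | insert a s has ih =>
      rw [Finset.sum_insert has, aglMk_zero_add]
      exact I.add_mem (hNtop _ a) ih
  have := hsum Finset.univ
  rwa [Finset.univ_sum_single] at this

end Upper

/-! ### Comparison of the two bounds -/

section Numerics

/-- More than a quarter of all `n × n` matrices over the field of `q` elements are invertible. -/
lemma pow_sq_lt_four_mul_card_GL {q n : ℕ} (hq : 2 ≤ q) (hn : 1 ≤ n) :
    q ^ (n * n) < 4 * ∏ i : Fin n, (q ^ n - q ^ (i : ℕ)) := by
  have hrec : ∀ m, ∏ i : Fin (m + 1), (q ^ (m + 1) - q ^ (i : ℕ)) =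
      (q ^ (m + 1) - 1) * (q ^ m * ∏ i : Fin m, (q ^ m - q ^ (i : ℕ))) := by
    intro m
    rw [Fin.prod_univ_succ]
    congr 1
    have : ∀ i : Fin m, q ^ (m + 1) - q ^ ((i.succ : Fin (m + 1)) : ℕ) =
        q * (q ^ m - q ^ (i : ℕ)) := by
      intro i
      rw [Fin.val_succ, Nat.mul_sub, pow_succ', pow_succ']
    rw [Finset.prod_congr rfl (fun i _ => this i), Finset.prod_mul_distrib]
    simp
  -- the constant `1 / 4` alone is not preserved by the induction step; the summand
  -- `(1 / 2) ^ (m + 1)` absorbs the factor `1 - q ^ (-(m + 1))`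
  have key : ∀ m, 1 ≤ m → (1 / 4 + (1 / 2) ^ (m + 1) : ℝ) * (q : ℝ) ^ (m * m) ≤
      ((∏ i : Fin m, (q ^ m - q ^ (i : ℕ)) : ℕ) : ℝ) := by
    intro m hm
    induction m, hm using Nat.le_induction with
    | base =>
      have h2 : (2 : ℝ) ≤ q := by exact_mod_cast hq
      simp [Nat.cast_sub (by omega : 1 ≤ q)]
      linarith
    | succ m hm ih =>
      rw [hrec]
      have h1 : 1 ≤ q ^ (m + 1) := Nat.one_le_pow _ _ (by omega)
      push_cast [Nat.cast_sub h1]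
      have hq2 : (2 : ℝ) ^ (m + 1) ≤ (q : ℝ) ^ (m + 1) :=
        pow_le_pow_left₀ (by norm_num) (by exact_mod_cast hq) _
      set G : ℝ := ((∏ i : Fin m, (q ^ m - q ^ (i : ℕ)) : ℕ) : ℝ) with hG
      have hGc : (∏ i : Fin m, (((q ^ m - q ^ (i : ℕ) : ℕ)) : ℝ)) = G := by
        rw [hG]; push_cast; rfl
      rw [hGc]
      set y : ℝ := (1 / 2) ^ (m + 1) with hy
      have hy0 : 0 < y := by positivity
      have hy4 : y ≤ 1 / 4 := by
        have : y ≤ (1 / 2) ^ 2 :=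
          pow_le_pow_of_le_one (by norm_num) (by norm_num) (by omega)
        linarith
      have hQ : (q : ℝ) ^ (m + 1) * (1 - y) ≤ (q : ℝ) ^ (m + 1) - 1 := by
        have : (2 : ℝ) ^ (m + 1) * y = 1 := by
          rw [hy, ← mul_pow]; norm_num
        nlinarith
      have e1 : (q : ℝ) ^ ((m + 1) * (m + 1)) =
          (q : ℝ) ^ (m + 1) * ((q : ℝ) ^ m * (q : ℝ) ^ (m * m)) := by ring
      have e2 : (1 / 2 : ℝ) ^ (m + 1 + 1) = y / 2 := by rw [hy, pow_succ _ (m + 1)]; ring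
      rw [e1, e2]
      have hpos : 0 ≤ (q : ℝ) ^ m := by positivity
      have hpos1 : 0 ≤ (q : ℝ) ^ (m + 1) := by positivity
      have hpos2 : 0 ≤ (q : ℝ) ^ (m * m) := by positivity
      calc (1 / 4 + y / 2) * ((q : ℝ) ^ (m + 1) * ((q : ℝ) ^ m * (q : ℝ) ^ (m * m)))
          ≤ ((1 - y) * (1 / 4 + y)) *
              ((q : ℝ) ^ (m + 1) * ((q : ℝ) ^ m * (q : ℝ) ^ (m * m))) := by
            refine mul_le_mul_of_nonneg_right ?_ (by positivity)
            nlinarith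
        _ = ((q : ℝ) ^ (m + 1) * (1 - y)) * ((q : ℝ) ^ m *
              ((1 / 4 + y) * (q : ℝ) ^ (m * m))) := by ring
        _ ≤ ((q : ℝ) ^ (m + 1) - 1) * ((q : ℝ) ^ m * G) := by
            refine mul_le_mul hQ ?_ (by positivity) ?_
            · exact mul_le_mul_of_nonneg_left ih hpos
            · have : (1 : ℝ) ≤ (q : ℝ) ^ (m + 1) := by exact_mod_cast h1
              linarith
  have h := key n hn
  have hpos : (0 : ℝ) < (1 / 2) ^ (n + 1) * (q : ℝ) ^ (n * n) := by
    have : 0 < q := by omega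
    positivity
  have : ((q ^ (n * n) : ℕ) : ℝ) < ((4 * ∏ i : Fin n, (q ^ n - q ^ (i : ℕ)) : ℕ) : ℝ) := by
    rw [Nat.cast_mul, Nat.cast_pow]
    push_cast at h ⊢
    nlinarith
  exact_mod_cast this

/-- The comparison of the two bounds: `N` stands for the size of a cover of the semisimple
quotient, `Q` for the order of the big field and `P` for the number of points of the projective
space of dimension `n - 1` over it. -/
lemma numeric_comparison {q n d Q P N G : ℕ} (hq : 2 ≤ q) (hn : 3 ≤ n) (hd : 1 ≤ d)
    (hdlt : d < n - n / n.minFac) (hQ : Q = q ^ d) (hP : P * (Q - 1) = Q ^ n - 1)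
    (hG : q ^ (n * n) < 4 * G)
    (hN : G ≤ N * (n.minFac * q ^ (n * (n / n.minFac))))
    (h32 : ¬ (n = 3 ∧ q = 2)) : Q ^ n + P < N := by
  set a := n.minFac with ha
  set m := n / a with hm
  have ham : a * m = n := Nat.mul_div_cancel' n.minFac_dvd
  have ha2 : 2 ≤ a := (Nat.minFac_prime (by omega)).two_le
  have han : a ≤ n := Nat.minFac_le (by omega)
  obtain ⟨e, he⟩ : ∃ e, n = m + e + 1 := ⟨n - m - 1, by omega⟩
  have hde : d ≤ e := by omega
  have hmn : 2 * m ≤ n := by nlinarith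
  have hqpos : 0 < q := by omega
  -- since `n * (n - m) = n + n * e`, the bounds on `G` give `N > q ^ n * q ^ (n * e) / (4 * a)`,
  -- to be compared with `Q ^ n ≤ q ^ (n * e)`
  have hlow : q ^ n * q ^ (n * e) < 4 * N * a := by
    have h1 : q ^ (n * m) * (q ^ n * q ^ (n * e)) < q ^ (n * m) * (4 * N * a) := by
      calc q ^ (n * m) * (q ^ n * q ^ (n * e)) = q ^ (n * n) := by
            rw [← pow_add, ← pow_add]
            congr 1
            conv_rhs => rw [show n * n = n * (m + e + 1) by rw [← he]]
            ring
        _ < 4 * G := hG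
        _ ≤ 4 * (N * (a * q ^ (n * m))) := Nat.mul_le_mul_left _ hN
        _ = _ := by ring
    exact lt_of_mul_lt_mul_left h1 (Nat.zero_le _)
  have hQ2 : 2 ≤ Q := by
    rw [hQ]; exact hq.trans (Nat.le_self_pow (by omega) q)
  have hQn : 1 ≤ Q ^ n := Nat.one_le_pow _ _ (by omega)
  have hQe : Q ^ n ≤ q ^ (n * e) := by
    rw [hQ, ← pow_mul, mul_comm]
    exact Nat.pow_le_pow_right hqpos (Nat.mul_le_mul_left _ hde)
  have hP1 : P < Q ^ n := by
    have : P * 1 ≤ P * (Q - 1) := Nat.mul_le_mul_left _ (by omega)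
    omega
  -- for `n = 3, 4` the estimate `P < Q ^ n` is enough; for `n ≥ 5` the value of `a` is not
  -- known, and the better estimate `Q ^ n + P ≤ (4 / 3) * q ^ (n * e)` is used
  rcases Nat.lt_or_ge n 5 with hn5 | hn5
  · have hn34 : n = 3 ∨ n = 4 := by omega
    rcases hn34 with h3 | h4
    · have ha3 : a = 3 := by rw [ha, h3]; norm_num
      have hq3 : 3 ≤ q := by
        by_contra hlt
        exact h32 ⟨h3, by omega⟩
      have h27 : 3 ^ n ≤ q ^ n := Nat.pow_le_pow_left hq3 n
      rw [ha3] at hlow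
      have hmul : 3 ^ n * q ^ (n * e) ≤ q ^ n * q ^ (n * e) := Nat.mul_le_mul_right _ h27
      have h27' : 3 ^ n = 27 := by rw [h3]; norm_num
      rw [h27'] at hmul
      generalize q ^ n * q ^ (n * e) = Y at *
      generalize q ^ (n * e) = X at *
      generalize Q ^ n = Z at *
      omega
    · have ha4 : a = 2 := by rw [ha, h4]; norm_num
      have h16 : 2 ^ n ≤ q ^ n := Nat.pow_le_pow_left hq n
      rw [ha4] at hlow
      have hmul : 2 ^ n * q ^ (n * e) ≤ q ^ n * q ^ (n * e) := Nat.mul_le_mul_right _ h16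
      have h16' : 2 ^ n = 16 := by rw [h4]; norm_num
      rw [h16'] at hmul
      generalize q ^ n * q ^ (n * e) = Y at *
      generalize q ^ (n * e) = X at *
      generalize Q ^ n = Z at *
      omega
  · have h2n : ∀ m, 5 ≤ m → 16 * m < 3 * 2 ^ m := by
      intro m hm
      induction m, hm using Nat.le_induction with
      | base => norm_num
      | succ m hm ih => rw [pow_succ]; omega
    have hqn : 16 * a ≤ 3 * q ^ n := by
      have h1 := h2n n hn5
      have h2 : 2 ^ n ≤ q ^ n := Nat.pow_le_pow_left hq n
      omega
    have hU : 3 * (Q ^ n + P) ≤ 4 * q ^ (n * e) := by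
      rcases Nat.lt_or_ge Q 4 with h4 | h4
      · have hd1 : d = 1 := by
          by_contra hne
          have : 2 ^ 2 ≤ q ^ d :=
            (Nat.pow_le_pow_left hq 2).trans (Nat.pow_le_pow_right hqpos (by omega))
          omega
        have he2 : 2 ≤ e := by omega
        have h5 : q ^ n * q ^ n ≤ q ^ (n * e) := by
          rw [← pow_add]
          exact Nat.pow_le_pow_right hqpos (by nlinarith)
        rw [hd1, pow_one] at hQ
        subst hQ
        have h6 : 2 ^ 5 ≤ Q ^ n :=
          (Nat.pow_le_pow_left hq 5).trans (Nat.pow_le_pow_right hqpos hn5)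
        have h6' : 2 ^ 5 * Q ^ n ≤ Q ^ n * Q ^ n := Nat.mul_le_mul_right _ h6
        omega
      · have : P * 3 ≤ P * (Q - 1) := Nat.mul_le_mul_left _ (by omega)
        omega
    have h7 : 16 * a * q ^ (n * e) ≤ 3 * q ^ n * q ^ (n * e) := Nat.mul_le_mul_right _ hqn
    have h8 : a * (3 * (Q ^ n + P)) ≤ a * (4 * q ^ (n * e)) := Nat.mul_le_mul_left _ hU
    have h9 : a * (Q ^ n + P) < a * N := by
      have e1 : 16 * a * q ^ (n * e) = 16 * (a * q ^ (n * e)) := by ring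
      have e2 : 3 * q ^ n * q ^ (n * e) = 3 * (q ^ n * q ^ (n * e)) := by ring
      have e3 : a * (3 * (Q ^ n + P)) = 3 * (a * (Q ^ n + P)) := by ring
      have e4 : a * (4 * q ^ (n * e)) = 4 * (a * q ^ (n * e)) := by ring
      have e5 : 4 * N * a = 4 * (a * N) := by ring
      omega
    exact lt_of_mul_lt_mul_left h9 (Nat.zero_le _)

end Numerics

/-! ### The covering number of `AGL n F1 F2` against those of its quotients -/

section Final

/-- If `I` contains the kernel of the surjection `f`, then `A / I` is a quotient of `B`. -/
lemma coveringNumber_le_quotient {A B : Type*} [NonUnitalRing A] [NonUnitalRing B]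
    (f : A →ₙ+* B) (hf : Function.Surjective f) (I : TwoSidedIdeal A)
    (h : ∀ x, f x = 0 → x ∈ I) : coveringNumber B ≤ coveringNumber I.ringCon.Quotient := by
  have key : ∀ x y : A, f x = f y → (x : I.ringCon.Quotient) = y := by
    intro x y hxy
    rw [RingCon.eq]
    exact (I.rel_iff x y).2 (h _ (by rw [map_sub, hxy, sub_self]))
  let s : B → A := Function.surjInv hf
  have hs : ∀ b, f (s b) = b := Function.surjInv_eq hf
  let g : B →ₙ+* I.ringCon.Quotient :=
    { toFun := fun b => (s b : I.ringCon.Quotient)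
      map_zero' := by
        rw [← RingCon.coe_zero]
        exact key _ _ (by rw [hs, map_zero])
      map_add' := fun x y => by
        rw [← RingCon.coe_add]
        exact key _ _ (by rw [map_add, hs, hs, hs])
      map_mul' := fun x y => by
        rw [← RingCon.coe_mul]
        exact key _ _ (by rw [map_mul, hs, hs, hs]) }
  refine coveringNumber_le_of_surjective g fun y => ?_
  obtain ⟨x, rfl⟩ := Quotient.exists_rep y
  exact ⟨f x, key _ _ (hs _)⟩

/-- The covering number of `AGL n F1 F2` is smaller than that of its semisimple quotient, written
with `Module.End F1 K` in place of the matrix ring over `F1`. -/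
lemma coveringNumber_agl_lt {d n : ℕ} {F : Type*} [Field F] [Finite F] {F1 F2 : Subfield F}
    {K : Type*} [Field K] [Finite K] [Algebra F1 K] (hK : Module.finrank F1 K = n)
    (hn : 3 ≤ n) (hd : 1 ≤ d) (hF : Nat.card F = Nat.card F1 ^ d)
    (hdlt : d < n - n / n.minFac) (h32 : ¬ (n = 3 ∧ Nat.card F1 = 2)) :
    coveringNumber (AGL n F1 F2) < coveringNumber (Module.End F1 K × F2) := by
  refine (coveringNumber_agl_le (by omega)).trans_lt ?_
  refine (ENat.natCast_lt_natCast.2 (Nat.lt_succ_self _)).trans_le (le_sInf ?_)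
  rintro _ ⟨C, hC, rfl⟩
  refine ENat.natCast_le_natCast.2 (Nat.succ_le_of_lt ?_)
  have hq : 2 ≤ Nat.card F1 := Finite.one_lt_card
  have hN := card_units_le_of_cover n hK (by omega) C hC
  rw [card_units_end n hK] at hN
  refine numeric_comparison hq hn hd hdlt hF ?_ (pow_sq_lt_four_mul_card_GL hq (by omega)) hN h32
  have := Projectivization.card F (Fin n → F)
  rw [Nat.card_fun, Nat.card_fin] at this
  exact this.symm

end Final

/-- Theorem 5.7: for `n ≥ 3` and `d < n − n/a`,
`σ(A(n,q1,q2)) ≤ σ(M_n(q1))` with equality only when `n = 3` and `q1 = 2`; consequently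
`A(n,q1,q2)` is σ-elementary whenever `(n,q1) ≠ (3,2)`. -/
theorem AGL_coveringNumber_le_matrix
    (p d1 d2 n d : ℕ) (hp : p.Prime) (hd1 : 1 ≤ d1) (hd2 : 1 ≤ d2) (hn : 3 ≤ n)
    (F : Type) [Field F] [Fintype F] (F1 F2 : Subfield F)
    (hF1 : Nat.card F1 = p ^ d1) (hF2 : Nat.card F2 = p ^ d2)
    (hF : Nat.card F = p ^ Nat.lcm d1 d2) (hcomp : F1 ⊔ F2 = ⊤)
    (hd : (p ^ d1) ^ d = p ^ Nat.lcm d1 d2)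
    (hdlt : d < n - n / n.minFac) :
    coveringNumber ↥(AGL n F1 F2) ≤ coveringNumber (Matrix (Fin n) (Fin n) ↥F1) ∧
    (coveringNumber ↥(AGL n F1 F2) = coveringNumber (Matrix (Fin n) (Fin n) ↥F1) →
      n = 3 ∧ p ^ d1 = 2) ∧
    (¬ (n = 3 ∧ p ^ d1 = 2) → IsSigmaElementary ↥(AGL n F1 F2)) := by
  have := Fact.mk hp
  have hlcm : 0 < Nat.lcm d1 d2 := Nat.lcm_pos hd1 hd2
  have hdpos : 1 ≤ d := by
    rw [← pow_mul] at hd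
    have := Nat.pow_right_injective hp.two_le hd
    exact Nat.pos_of_ne_zero fun h => by simp [h] at this; omega
  have hchar : CharP F1 p := by
    have : Fintype F1 := Fintype.ofFinite _
    refine charP_of_card_eq_prime_pow (f := d1) ?_
    rw [Fintype.card_eq_nat_card, hF1]
  have : NeZero n := ⟨by omega⟩
  have hK := FiniteField.finrank_extension F1 p n
  let K := FiniteField.Extension F1 p n
  -- the matrix ring over `F1` as the endomorphism ring of the extension of degree `n` of `F1`
  let e : Module.End F1 K ≃+* Matrix (Fin n) (Fin n) F1 :=
    (algEquivMatrix (Module.finBasisOfFinrankEq F1 K hK)).toRingEquiv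
  let f : AGL n F1 F2 →+* Module.End F1 K × F2 :=
    (RingEquiv.prodCongr e.symm (RingEquiv.refl F2)).toRingHom.comp (aglProj n F1 F2)
  have hf : Function.Surjective f :=
    (RingEquiv.prodCongr e.symm (RingEquiv.refl F2)).surjective.comp aglProj_surjective
  have hfker : ∀ x, f x = 0 → aglProj n F1 F2 x = 0 := fun x hx =>
    (RingEquiv.map_eq_zero_iff (RingEquiv.prodCongr e.symm (RingEquiv.refl F2))).1 hx
  have hlt : ¬ (n = 3 ∧ p ^ d1 = 2) →
      coveringNumber (AGL n F1 F2) < coveringNumber (Module.End F1 K × F2) := fun h32 =>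
    coveringNumber_agl_lt hK hn hdpos (by rw [hF1, hd, hF]) hdlt (by rwa [hF1])
  have hM : coveringNumber (Module.End F1 K × F2) ≤
      coveringNumber (Matrix (Fin n) (Fin n) F1) :=
    coveringNumber_le_of_surjective
      ((e.toRingHom.comp (RingHom.fst (Module.End F1 K) F2) :
        Module.End F1 K × F2 →+* _) : Module.End F1 K × F2 →ₙ+* _)
      (e.surjective.comp Prod.fst_surjective)
  refine ⟨?_, ?_, ?_⟩
  · exact coveringNumber_le_of_surjective
      (((RingHom.fst (Matrix (Fin n) (Fin n) F1) F2).comp (aglProj n F1 F2) :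
        AGL n F1 F2 →+* _) : AGL n F1 F2 →ₙ+* _)
      (Prod.fst_surjective.comp aglProj_surjective)
  · intro heq
    by_contra h32
    exact ((hlt h32).trans_le hM).ne heq
  · intro h32 I hI
    refine (hlt h32).trans_le (coveringNumber_le_quotient (f : AGL n F1 F2 →ₙ+* _) hf I ?_)
    exact fun x hx => aglProj_ker_le hcomp (by omega) I hI x (hfker x hx)
end
end

section
/- Let X be a finite set of elements of an ambient set R, let 𝔐 be a finite collection of subsets of R partitioned into classes (ℳ_j)_{j ∈ I_R}, let I ⊆ I_R, and let 𝒟 = ∪_{i ∈ I} ℳ_i. Assume: (ii) X is contained in the union of the members of 𝒟; (iii) each element of X lies in exactly one member of 𝒟, each member of 𝒟 contains at least one element of X, and for each i ∈ I let X_i denote the set of elements of X lying in members of ℳ_i; (iv) for every i ∈ I and j ∈ I_R, any two members M, M′ of ℳ_j satisfy |M ∩ X_i| = |M′ ∩ X_i|. For M ∈ 𝔐 \ 𝒟, define c(M) = Σ_{i ∈ I} |M ∩ X_i| / |M_i ∩ X_i|, where M_i is any member of ℳ_i. If c(M) ≤ 1 for every M ∈ 𝔐 \ 𝒟, then every subcollection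 of 𝔐 whose union contains X has cardinality at least |𝒟|; if moreover c(M) < 1 for every M ∈ 𝔐 \ 𝒟, then 𝒟 is the unique subcollection of 𝔐 of minimal cardinality whose union contains X. -/
/-!
The proof is a weighted double count. Give `A` the weight
`w A = ∑ i ∈ Iset, |A ∩ Xi i| / |rep i ∩ Xi i|`. Points of `Xi i` lie in no member of `D` outside
class `i`, so a member of `D` has weight exactly `1`. The members of `D` are disjoint on each `Xi i`,
while a cover `B` of `X` covers each `Xi i` with possible overlaps, so
`∑ A ∈ D, |A ∩ Xi i| ≤ |Xi i| ≤ ∑ A ∈ B, |A ∩ Xi i|`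
(`sum_card_inter_le_sum_card_inter_of_cover`). Dividing by `|rep i ∩ Xi i|` and summing over `i`
gives `|D| ≤ ∑ A ∈ B, w A`, and the right side is at most `|B|` once every weight is at most `1`.
If the weights outside `D` are less than `1`, then the last bound is strict unless `B ⊆ D`; and no
proper subfamily of `D` covers `X`, since each member of `D` has a point of `X` of its own.
-/

open scoped Classical

noncomputable section

/-- A family that is disjoint on `Y` has at most as many incidences with `Y` as a family
covering `Y`: the number `|Y|` lies in between. -/
theorem sum_card_inter_le_sum_card_inter_of_cover {R : Type*} {Y : Finset R}
    {D B : Finset (Finset R)}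
    (hD : ∀ x ∈ Y, ∀ A ∈ D, ∀ A' ∈ D, x ∈ A → x ∈ A' → A = A')
    (hB : ∀ x ∈ Y, ∃ A ∈ B, x ∈ A) :
    ∑ A ∈ D, (A ∩ Y).card ≤ ∑ A ∈ B, (A ∩ Y).card := by
  have hdisj : Set.PairwiseDisjoint (D : Set (Finset R)) (fun A => A ∩ Y) := by
    intro A hA A' hA' hne
    refine Finset.disjoint_left.2 fun x hx hx' => hne ?_
    rw [Finset.mem_inter] at hx hx'
    exact hD x hx.2 A hA A' hA' hx.1 hx'.1
  calc ∑ A ∈ D, (A ∩ Y).card = (D.biUnion fun A => A ∩ Y).card :=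
        (Finset.card_biUnion hdisj).symm
    _ ≤ Y.card := Finset.card_le_card (Finset.biUnion_subset.2 fun _ _ => Finset.inter_subset_right)
    _ ≤ (B.biUnion fun A => A ∩ Y).card := by
        refine Finset.card_le_card fun x hx => ?_
        obtain ⟨A, hA, hxA⟩ := hB x hx
        exact Finset.mem_biUnion.2 ⟨A, hA, Finset.mem_inter.2 ⟨hxA, hx⟩⟩
    _ ≤ ∑ A ∈ B, (A ∩ Y).card := Finset.card_biUnion_le

/-- Lemma 4.3, combinatorial minimal-cover criterion. -/
theorem minimal_cover_criterion
    {R ι : Type*} (X : Finset R) (M : Finset (Finset R)) (cl : Finset R → ι)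
    (Iset : Finset ι)
    (D : Finset (Finset R)) (hD : D = M.filter (fun A => cl A ∈ Iset))
    (Xi : ι → Finset R)
    (hXi : ∀ i : ι, Xi i = X.filter (fun x => ∃ A ∈ D, cl A = i ∧ x ∈ A))
    (hcov : ∀ x ∈ X, ∃ A ∈ D, x ∈ A)
    (hpart : ∀ x ∈ X, ∃! A, A ∈ D ∧ x ∈ A)
    (hmeets : ∀ A ∈ D, ∃ x ∈ X, x ∈ A)
    (rep : ι → Finset R) (hrep : ∀ i ∈ Iset, rep i ∈ M ∧ cl (rep i) = i)
    (hiv : ∀ i ∈ Iset, ∀ j : ι, ∀ A ∈ M, ∀ B ∈ M, cl A = j → cl B = j →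
      (A ∩ Xi i).card = (B ∩ Xi i).card) :
    ((∀ A ∈ M, A ∉ D →
        (∑ i ∈ Iset, ((A ∩ Xi i).card : ℚ) / ((rep i ∩ Xi i).card : ℚ)) ≤ 1) →
      ∀ B ⊆ M, (∀ x ∈ X, ∃ A ∈ B, x ∈ A) → D.card ≤ B.card) ∧
    ((∀ A ∈ M, A ∉ D →
        (∑ i ∈ Iset, ((A ∩ Xi i).card : ℚ) / ((rep i ∩ Xi i).card : ℚ)) < 1) →
      ∀ B ⊆ M, (∀ x ∈ X, ∃ A ∈ B, x ∈ A) → B ≠ D → D.card < B.card) := by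
  have huniq : ∀ x ∈ X, ∀ A ∈ D, ∀ A' ∈ D, x ∈ A → x ∈ A' → A = A' :=
    fun x hx A hA A' hA' h h' => (hpart x hx).unique ⟨hA, h⟩ ⟨hA', h'⟩
  have hXiX : ∀ i, ∀ x ∈ Xi i, x ∈ X := fun i x hx => by
    rw [hXi] at hx
    exact (Finset.mem_filter.1 hx).1
  have hmemD : ∀ A, A ∈ D ↔ A ∈ M ∧ cl A ∈ Iset := fun A => by rw [hD, Finset.mem_filter]
  set w : Finset R → ℚ := fun A =>
    ∑ i ∈ Iset, ((A ∩ Xi i).card : ℚ) / ((rep i ∩ Xi i).card : ℚ) with hw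
  have hwD : ∀ A ∈ D, w A = 1 := by
    intro A hA
    obtain ⟨hAM, hAI⟩ := (hmemD A).1 hA
    have hzero : ∀ i ∈ Iset, i ≠ cl A →
        ((A ∩ Xi i).card : ℚ) / ((rep i ∩ Xi i).card : ℚ) = 0 := by
      intro i _ hne
      have hempty : A ∩ Xi i = ∅ := by
        refine Finset.eq_empty_of_forall_notMem fun x hx => hne ?_
        obtain ⟨hxA, hxi⟩ := Finset.mem_inter.1 hx
        have hxX := hXiX i x hxi
        rw [hXi] at hxi
        obtain ⟨_, A', hA', hcl, hxA'⟩ := Finset.mem_filter.1 hxi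
        rw [huniq x hxX A hA A' hA' hxA hxA', hcl]
      rw [hempty, Finset.card_empty, Nat.cast_zero, zero_div]
    obtain ⟨hrM, hrcl⟩ := hrep _ hAI
    have hcard : (rep (cl A) ∩ Xi (cl A)).card = (A ∩ Xi (cl A)).card :=
      hiv _ hAI (cl A) _ hrM A hAM hrcl rfl
    have hpos : 0 < (A ∩ Xi (cl A)).card := by
      obtain ⟨x, hxX, hxA⟩ := hmeets A hA
      refine Finset.card_pos.2 ⟨x, Finset.mem_inter.2 ⟨hxA, ?_⟩⟩
      rw [hXi]
      exact Finset.mem_filter.2 ⟨hxX, A, hA, rfl, hxA⟩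
    simp only [hw]
    rw [Finset.sum_eq_single_of_mem (cl A) hAI hzero, hcard]
    exact div_self (Nat.cast_ne_zero.2 hpos.ne')
  have hkey : ∀ B : Finset (Finset R), (∀ x ∈ X, ∃ A ∈ B, x ∈ A) → (D.card : ℚ) ≤ ∑ A ∈ B, w A := by
    intro B hB
    have h1 : (D.card : ℚ) = ∑ A ∈ D, w A := by
      rw [Finset.sum_congr rfl hwD]
      simp
    rw [h1]
    simp only [hw]
    rw [Finset.sum_comm, Finset.sum_comm (s := B)]
    refine Finset.sum_le_sum fun i _ => ?_
    rw [← Finset.sum_div, ← Finset.sum_div]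
    have hcount := sum_card_inter_le_sum_card_inter_of_cover
      (fun x hx => huniq x (hXiX i x hx)) (fun x hx => hB x (hXiX i x hx))
    exact div_le_div_of_nonneg_right (by exact_mod_cast hcount) (Nat.cast_nonneg _)
  constructor
  · intro hc B hBM hB
    have hle : ∑ A ∈ B, w A ≤ ∑ A ∈ B, (1 : ℚ) := Finset.sum_le_sum fun A hA => by
      by_cases hAD : A ∈ D
      · exact (hwD A hAD).le
      · exact hc A (hBM hA) hAD
    have h := (hkey B hB).trans hle
    simp only [Finset.sum_const, nsmul_eq_mul, mul_one] at h
    exact_mod_cast h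
  · intro hc B hBM hB hne
    have hout : ∃ A ∈ B, A ∉ D := by
      by_contra! hBD
      refine hne (Finset.Subset.antisymm hBD fun A hA => ?_)
      obtain ⟨x, hxX, hxA⟩ := hmeets A hA
      obtain ⟨A', hA', hxA'⟩ := hB x hxX
      rwa [huniq x hxX A hA A' (hBD A' hA') hxA hxA']
    obtain ⟨A₀, hA₀, hA₀D⟩ := hout
    have hlt : ∑ A ∈ B, w A < ∑ A ∈ B, (1 : ℚ) := by
      refine Finset.sum_lt_sum (fun A hA => ?_) ⟨A₀, hA₀, hc A₀ (hBM hA₀) hA₀D⟩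
      by_cases hAD : A ∈ D
      · exact (hwD A hAD).le
      · exact (hc A (hBM hA) hAD).le
    have h := (hkey B hB).trans_lt hlt
    simp only [Finset.sum_const, nsmul_eq_mul, mul_one] at h
    exact_mod_cast h
end
end
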